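/- Let b > 1/2 and let j ∈ ℕ satisfy j < b - 1/2. Then μ_j = (2j+1)b - j(j+1) is an eigenvalue of the fibered operator P_b(1): there exists a nonzero smooth function u : (0,∞) → ℂ with u ∈ L²((0,∞), dy) and y·u'(y) ∈ L²((0,∞), dy), such that (y - b)² u(y) - (y² u'(y))' = μ_j u(y) for all y > 0. In particular, for j = 0 one can take u(y) = y^{b-1} e^{-y}, which is a ground state with eigenvalue b. -/

import Mathlib

open MeasureTheory Real Filter

noncomputable section

/-- The fibered operator `P_b(1) f = (y-b)² f - (y² f')'` on `(0,∞)`. -/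
def Pb1 (b : ℝ) (u : ℝ → ℂ) (y : ℝ) : ℂ :=
  (((y - b) ^ 2 : ℝ) : ℂ) * u y - deriv (fun z : ℝ => (z : ℂ) ^ 2 * deriv u z) y

open Polynomial in
/-- weighted polynomial -/
def wr (a : ℝ) (p : ℝ[X]) (y : ℝ) : ℝ := y ^ a * Real.exp (-y) * p.eval y

open Polynomial in
/-- complex version of the weighted polynomial -/
def wf (a : ℝ) (p : ℝ[X]) (y : ℝ) : ℂ := ((wr a p y : ℝ) : ℂ)

open Polynomial in
/-- action of `y d/dy` on the polynomial factor -/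
def TT (a : ℝ) (p : ℝ[X]) : ℝ[X] := (C a - X) * p + X * derivative p

/-- coefficients of the polynomial solution -/
def cc (a : ℝ) (j : ℕ) : ℕ → ℝ
  | 0 => 1
  | k + 1 => 2 * ((k : ℝ) - j) * cc a j k / (((k : ℝ) + 1) * (k + 2 * a + 2))

open Polynomial in
/-- the polynomial solution -/
def solPoly (a : ℝ) (j : ℕ) : ℝ[X] := ∑ k ∈ Finset.range (j + 1), monomial k (cc a j k)

lemma cc_zero (a : ℝ) (j k : ℕ) : cc a j (j + 1 + k) = 0 := by
  induction k with
  | zero => simp [cc]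
  | succ k ih => rw [← add_assoc, cc, ih]; simp

lemma solPoly_coeff (a : ℝ) (j k : ℕ) : (solPoly a j).coeff k = cc a j k := by
  simp only [solPoly, Polynomial.finsetSum_coeff, Polynomial.coeff_monomial]
  rw [Finset.sum_ite_eq']
  split_ifs with h
  · rfl
  · obtain ⟨m, rfl⟩ := Nat.exists_eq_add_of_le (not_lt.mp (fun h' => h (Finset.mem_range.mpr h')))
    exact (cc_zero a j m).symm

lemma solPoly_ne_zero (a : ℝ) (j : ℕ) : solPoly a j ≠ 0 := by
  intro h
  have := solPoly_coeff a j 0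
  simp [h, cc] at this

open Polynomial in
lemma solPoly_ode (a : ℝ) (ha : -1 / 2 < a) (j : ℕ) :
    X * derivative (derivative (solPoly a j)) + C (2 * (a + 1)) * derivative (solPoly a j)
      - C 2 * (X * derivative (solPoly a j)) + C (2 * (j : ℝ)) * solPoly a j = 0 := by
  ext k
  have hk : cc a j (k + 1) * (((k : ℝ) + 1) * (k + 2 * a + 2)) = 2 * ((k : ℝ) - j) * cc a j k := by
    rw [cc]
    have : (0 : ℝ) ≤ k := Nat.cast_nonneg k
    have h1 : (k : ℝ) + 1 ≠ 0 := by positivity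
    have h2 : (k : ℝ) + 2 * a + 2 ≠ 0 := by
      have : 0 < (k : ℝ) + 2 * a + 2 := by linarith
      exact this.ne'
    field_simp
  cases k with
  | zero =>
    simp only [coeff_add, coeff_sub, coeff_C_mul, coeff_derivative, solPoly_coeff,
      coeff_X_mul_zero, coeff_zero]
    push_cast at hk ⊢
    linarith
  | succ k =>
    simp only [coeff_add, coeff_sub, coeff_C_mul, coeff_derivative, solPoly_coeff,
      coeff_X_mul, coeff_zero]
    push_cast at hk ⊢
    linarith

open Polynomial in
lemma wr_hasDeriv (a : ℝ) (p : ℝ[X]) (y : ℝ) (hy : 0 < y) :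
    HasDerivAt (wr a p) (y⁻¹ * wr a (TT a p) y) y := by
  have h1 : HasDerivAt (fun y : ℝ => y ^ a) (a * y ^ (a - 1)) y :=
    Real.hasDerivAt_rpow_const (Or.inl hy.ne')
  have h2 : HasDerivAt (fun y : ℝ => Real.exp (-y)) (Real.exp (-y) * (-1)) y :=
    (hasDerivAt_neg y).exp
  have h := (h1.mul h2).mul (p.hasDerivAt y)
  refine h.congr_deriv ?_
  rw [Real.rpow_sub_one hy.ne']
  simp only [wr, TT, eval_add, eval_mul, eval_sub, eval_C, eval_X, Pi.mul_apply]
  field_simp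
  ring

open Polynomial in
lemma wf_hasDeriv (a : ℝ) (p : ℝ[X]) (y : ℝ) (hy : 0 < y) :
    HasDerivAt (wf a p) (((y⁻¹ * wr a (TT a p) y : ℝ)) : ℂ) y :=
  (wr_hasDeriv a p y hy).ofReal_comp

open Polynomial in
lemma wr_memLp (a : ℝ) (ha : -1 / 2 < a) (p : ℝ[X]) :
    MemLp (wr a p) 2 (volume.restrict (Set.Ioi (0 : ℝ))) := by
  induction p using Polynomial.induction_on' with
  | add p q hp hq =>
    have e : wr a (p + q) = wr a p + wr a q := by
      funext y; simp [wr]; ring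
    rw [e]; exact hp.add hq
  | monomial k c =>
    have hm : AEStronglyMeasurable (wr a (monomial k c)) (volume.restrict (Set.Ioi (0 : ℝ))) := by
      apply Measurable.aestronglyMeasurable
      unfold wr
      simp only [eval_monomial]
      fun_prop
    rw [memLp_two_iff_integrable_sq hm]
    have hi := integrableOn_rpow_mul_exp_neg_mul_rpow (p := 1) (s := 2 * a + 2 * k) (b := 2)
      (by have : (0 : ℝ) ≤ k := Nat.cast_nonneg k
          linarith) one_pos (by norm_num)
    have hi2 : IntegrableOn (fun y => c ^ 2 * (y ^ (2 * a + 2 * k) * Real.exp (-2 * y ^ (1 : ℝ))))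
      (Set.Ioi 0) := hi.const_mul (c ^ 2)
    refine IntegrableOn.congr_fun hi2 ?_ measurableSet_Ioi
    intro y hy
    have hy : 0 < y := hy
    simp only [wr, eval_monomial, Real.rpow_one]
    rw [Real.rpow_add hy, mul_comm 2 a, Real.rpow_mul hy.le, mul_comm 2 (k : ℝ),
      Real.rpow_mul hy.le, Real.rpow_natCast, show -2 * y = -y + -y by ring, Real.exp_add]
    simp only [Real.rpow_two]
    ring

open Polynomial in
lemma wf_memLp (a : ℝ) (ha : -1 / 2 < a) (p : ℝ[X]) :
    MemLp (wf a p) 2 (volume.restrict (Set.Ioi (0 : ℝ))) :=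
  (wr_memLp a ha p).ofReal

open Polynomial in
lemma frozen_aux_main (b : ℝ) (j : ℕ) (a : ℝ) (hab : a = b - 1 - j) (ha : -1 / 2 < a) (p : ℝ[X])
    (hp : p ≠ 0)
    (hode : X * derivative (derivative p) + C (2 * (a + 1)) * derivative p
      - C 2 * (X * derivative p) + C (2 * (j : ℝ)) * p = 0) :
    ContDiffOn ℝ (⊤ : ℕ∞) (wf a p) (Set.Ioi 0) ∧ (∃ y > (0 : ℝ), wf a p y ≠ 0) ∧
      MemLp (wf a p) 2 (volume.restrict (Set.Ioi (0 : ℝ))) ∧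
      MemLp (fun y : ℝ => (y : ℂ) * deriv (wf a p) y) 2 (volume.restrict (Set.Ioi (0 : ℝ))) ∧
      ∀ y > (0 : ℝ), Pb1 b (wf a p) y =
        (((2 * (j : ℝ) + 1) * b - (j : ℝ) * ((j : ℝ) + 1) : ℝ) : ℂ) * wf a p y := by
  refine ⟨?_, ?_, wf_memLp a ha p, ?_, ?_⟩
  · have h : ContDiffOn ℝ (⊤ : ℕ∞) (wr a p) (Set.Ioi 0) := by
      intro y hy
      have hy : 0 < y := hy
      have h1 : ContDiffAt ℝ (⊤ : ℕ∞) (fun y : ℝ => y ^ a) y :=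
        Real.contDiffAt_rpow_const_of_ne hy.ne'
      have h2 : ContDiffAt ℝ (⊤ : ℕ∞) (fun y : ℝ => Real.exp (-y)) y :=
        (contDiff_neg.exp).contDiffAt
      have h3 : ContDiffAt ℝ (⊤ : ℕ∞) (fun y : ℝ => p.eval y) y := by
        simpa using (p.contDiff_aeval (𝕜 := ℝ) (⊤ : ℕ∞)).contDiffAt (x := y)
      exact ((h1.mul h2).mul h3).contDiffWithinAt
    exact Complex.ofRealCLM.contDiff.comp_contDiffOn h
  · by_contra! hcon
    apply hp
    apply Polynomial.eq_zero_of_infinite_isRoot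
    refine (Set.Ioi_infinite (0 : ℝ)).mono ?_
    intro y hy
    have hy : 0 < y := hy
    have h := hcon y hy
    simp only [wf, wr, Complex.ofReal_eq_zero] at h
    have h1 : y ^ a * Real.exp (-y) ≠ 0 := by positivity
    exact (mul_eq_zero.mp h).resolve_left h1
  · refine (memLp_congr_ae ?_).mp (wf_memLp a ha (TT a p))
    refine (ae_restrict_iff' measurableSet_Ioi).mpr (Eventually.of_forall ?_)
    intro y hy
    have hy : 0 < y := hy
    beta_reduce
    rw [(wf_hasDeriv a p y hy).deriv, ← Complex.ofReal_mul, mul_inv_cancel_left₀ hy.ne']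
    rfl
  · intro y hy
    have hy : 0 < y := hy
    have hev : (fun z : ℝ => (z : ℂ) ^ 2 * deriv (wf a p) z) =ᶠ[nhds y]
        fun z : ℝ => ((z * wr a (TT a p) z : ℝ) : ℂ) := by
      filter_upwards [Ioi_mem_nhds hy] with z hz
      have hz : 0 < z := hz
      rw [(wf_hasDeriv a p z hz).deriv, ← Complex.ofReal_pow, ← Complex.ofReal_mul]
      congr 1
      field_simp
    have hd : HasDerivAt (fun z : ℝ => z * wr a (TT a p) z)
        (1 * wr a (TT a p) y + y * (y⁻¹ * wr a (TT a (TT a p)) y)) y :=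
      (hasDerivAt_id y).mul (wr_hasDeriv a (TT a p) y hy)
    rw [Pb1, hev.deriv_eq, hd.ofReal_comp.deriv, mul_inv_cancel_left₀ hy.ne', wf,
      ← Complex.ofReal_mul, ← Complex.ofReal_mul, ← Complex.ofReal_sub]
    congr 1
    have ho := congrArg (Polynomial.eval y) hode
    simp only [eval_add, eval_sub, eval_mul, eval_C, eval_X, eval_zero] at ho
    simp only [wr, TT, eval_add, eval_sub, eval_mul, eval_C, eval_X, derivative_add,
      derivative_mul, derivative_sub, derivative_C, derivative_X, eval_zero, eval_one]
    subst hab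
    linear_combination (-(y ^ (b - 1 - j) * Real.exp (-y)) * y) * ho

/-- for `b > 1/2` and `j < b - 1/2`, `μ_j = (2j+1)b - j(j+1)` is an
eigenvalue of `P_b(1)`; for `j = 0`, `u(y) = y^{b-1} e^{-y}` is a ground state of
eigenvalue `b`. -/
theorem eigenvalues_of_fiber_operator (b : ℝ) (hb : 1 / 2 < b) (j : ℕ)
    (hj : (j : ℝ) < b - 1 / 2) :
    (∃ u : ℝ → ℂ, ContDiffOn ℝ (⊤ : ℕ∞) u (Set.Ioi 0) ∧ (∃ y > (0 : ℝ), u y ≠ 0) ∧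
      MemLp u 2 (volume.restrict (Set.Ioi (0 : ℝ))) ∧
      MemLp (fun y : ℝ => (y : ℂ) * deriv u y) 2 (volume.restrict (Set.Ioi (0 : ℝ))) ∧
      ∀ y > (0 : ℝ), Pb1 b u y =
        (((2 * (j : ℝ) + 1) * b - (j : ℝ) * ((j : ℝ) + 1) : ℝ) : ℂ) * u y) ∧
    (j = 0 →
      ∀ u₀ : ℝ → ℂ, u₀ = (fun y : ℝ => ((y ^ (b - 1) * Real.exp (-y) : ℝ) : ℂ)) →
        ContDiffOn ℝ (⊤ : ℕ∞) u₀ (Set.Ioi 0) ∧ (∃ y > (0 : ℝ), u₀ y ≠ 0) ∧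
        MemLp u₀ 2 (volume.restrict (Set.Ioi (0 : ℝ))) ∧
        MemLp (fun y : ℝ => (y : ℂ) * deriv u₀ y) 2 (volume.restrict (Set.Ioi (0 : ℝ))) ∧
        ∀ y > (0 : ℝ), Pb1 b u₀ y = (b : ℂ) * u₀ y) := by
  have key := @frozen_aux_main
  refine ⟨?_, ?_⟩
  · refine ⟨wf (b - 1 - j) (solPoly (b - 1 - j) j), ?_⟩
    have h := key b j (b - 1 - j) (by ring) (by linarith) (solPoly (b - 1 - j) j)
      (solPoly_ne_zero _ _) (solPoly_ode _ (by linarith) j)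
    exact h
  · rintro rfl u₀ rfl
    have h := key b 0 (b - 1) (by simp) (by linarith) 1 one_ne_zero (by simp)
    have e : wf (b - 1) 1 = (fun y : ℝ => ((y ^ (b - 1) * Real.exp (-y) : ℝ) : ℂ)) := by
      funext y; simp [wf, wr]
    rw [e] at h
    simpa using h
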